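/- arXiv:2008.10044 — 3 statements merged into one kernel-verified Lean document; each statement's English description precedes it below -/
import Mathlib

section
/- Let A be an artin algebra and M a finitely generated A-module. If there exists a (not necessarily finitely generated) A-module N of finite injective dimension d ≥ 1 such that Ext^d(M,N) ≠ 0, then d ≤ del M. -/
open CategoryTheory CategoryTheory.Limits

noncomputable section

namespace ArtinAlg

variable (A : Type) [Ring A]

/-- `M` admits a projective resolution of length at most `n`. -/
inductive ProjDimLE : ℕ → ModuleCat.{0} A → Prop
  | zero (M : ModuleCat.{0} A) (h : Projective M) : ProjDimLE 0 M
  | succ (n : ℕ) (M P : ModuleCat.{0} A) (f : P ⟶ M) (hP : Projective P) (hf : Epi f)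
      (h : ProjDimLE n (kernel f)) : ProjDimLE (n + 1) M

/-- `M` admits an injective coresolution of length at most `n`. -/
inductive InjDimLE : ℕ → ModuleCat.{0} A → Prop
  | zero (M : ModuleCat.{0} A) (h : Injective M) : InjDimLE 0 M
  | succ (n : ℕ) (M I : ModuleCat.{0} A) (f : M ⟶ I) (hI : Injective I) (hf : Mono f)
      (h : InjDimLE n (cokernel f)) : InjDimLE (n + 1) M

/-- The projective dimension `pd M ∈ ℕ∞`. -/
def projDim (M : ModuleCat.{0} A) : ℕ∞ :=
  sInf {d : ℕ∞ | ∃ n : ℕ, d = n ∧ ProjDimLE A n M}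

/-- The injective dimension `id M ∈ ℕ∞`. -/
def injDim (M : ModuleCat.{0} A) : ℕ∞ :=
  sInf {d : ℕ∞ | ∃ n : ℕ, d = n ∧ InjDimLE A n M}

/-- `f : P ⟶ M` is a projective cover: `P` is projective and `f` is an essential
(superfluous) epimorphism. -/
def IsProjectiveCoverHom {P M : ModuleCat.{0} A} (f : P ⟶ M) : Prop :=
  Projective P ∧ Epi f ∧ ∀ (N : ModuleCat.{0} A) (g : N ⟶ P), Epi (g ≫ f) → Epi g

/-- `P` is a projective cover of `M`. -/
def IsProjCoverOf (M P : ModuleCat.{0} A) : Prop :=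
  ∃ f : P ⟶ M, IsProjectiveCoverHom A f

/-- `f : M ⟶ I` is an injective envelope: `I` is injective and `f` is an essential
monomorphism. -/
def IsInjectiveEnvelopeHom {M I : ModuleCat.{0} A} (f : M ⟶ I) : Prop :=
  Injective I ∧ Mono f ∧ ∀ (N : ModuleCat.{0} A) (g : I ⟶ N), Mono (f ≫ g) → Mono g

/-- `I` is an injective envelope of `M`. -/
def IsInjEnvOf (M I : ModuleCat.{0} A) : Prop :=
  ∃ f : M ⟶ I, IsInjectiveEnvelopeHom A f

/-- `X ≅ Ω M`, the kernel of a projective cover of `M`. -/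
def IsSyzygyOf (M X : ModuleCat.{0} A) : Prop :=
  ∃ (P : ModuleCat.{0} A) (f : P ⟶ M), IsProjectiveCoverHom A f ∧ Nonempty (X ≅ kernel f)

/-- `X ≅ Σ M`, the cokernel of an injective envelope of `M`. -/
def IsCosyzygyOf (M X : ModuleCat.{0} A) : Prop :=
  ∃ (I : ModuleCat.{0} A) (f : M ⟶ I), IsInjectiveEnvelopeHom A f ∧ Nonempty (X ≅ cokernel f)

/-- `X ≅ Ω^n M`. -/
def IsNthSyzygy : ℕ → ModuleCat.{0} A → ModuleCat.{0} A → Prop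
  | 0, M, X => Nonempty (X ≅ M)
  | n + 1, M, X => ∃ Y, IsSyzygyOf A M Y ∧ IsNthSyzygy n Y X

/-- `X ≅ Σ^n M`. -/
def IsNthCosyzygy : ℕ → ModuleCat.{0} A → ModuleCat.{0} A → Prop
  | 0, M, X => Nonempty (X ≅ M)
  | n + 1, M, X => ∃ Y, IsCosyzygyOf A M Y ∧ IsNthCosyzygy n Y X

/-- `X` is a direct summand of `Y`. -/
def IsDirectSummandOf (X Y : ModuleCat.{0} A) : Prop :=
  ∃ (i : X ⟶ Y) (r : Y ⟶ X), i ≫ r = 𝟙 X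

/-- `X ∈ add W` : `X` is a direct summand of a finite direct sum of copies of `W`. -/
def InAdd (X W : ModuleCat.{0} A) : Prop :=
  ∃ n : ℕ, IsDirectSummandOf A X (ModuleCat.of A (Fin n → ↥W))

/-- The delooping level of `M` is at most `d` :
`Ω^d M ∈ add (A ⊕ Ω^{d+1} M')` for some finitely generated `M'`. -/
def DelLE (d : ℕ) (M : ModuleCat.{0} A) : Prop :=
  ∃ X, IsNthSyzygy A d M X ∧
    ∃ M' : ModuleCat.{0} A, Module.Finite A ↥M' ∧
      ∃ X', IsNthSyzygy A (d + 1) M' X' ∧ InAdd A X (ModuleCat.of A (A × ↥X'))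

/-- The delooping level `del M ∈ ℕ∞`. -/
def delLevel (M : ModuleCat.{0} A) : ℕ∞ :=
  sInf {d : ℕ∞ | ∃ n : ℕ, d = n ∧ DelLE A n M}

/-- The delooping level of the algebra: the supremum of `del S` over the simple modules. -/
def delAlg : ℕ∞ :=
  sSup {d : ℕ∞ | ∃ S : ModuleCat.{0} A, IsSimpleModule A ↥S ∧ delLevel A S = d}

/-- `Q` is a minimal injective cogenerator: the injective envelope of the direct sum of
a complete set of representatives of the simple modules. -/
def IsMinimalInjectiveCogenerator (Q : ModuleCat.{0} A) : Prop :=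
  ∃ (ι : Type) (_ : Fintype ι) (S : ι → ModuleCat.{0} A),
    (∀ i, IsSimpleModule A ↥(S i)) ∧
    (∀ T : ModuleCat.{0} A, IsSimpleModule A ↥T → ∃! i, Nonempty (↥T ≃ₗ[A] ↥(S i))) ∧
    IsInjEnvOf A (ModuleCat.of A (∀ i, ↥(S i))) Q

/-- The desuspending level of `M` is at most `d` :
`Σ^d M ∈ add (D(A) ⊕ Σ^{d+1} M')` for some finitely generated `M'`. -/
def DesLE (d : ℕ) (M : ModuleCat.{0} A) : Prop :=
  ∃ X, IsNthCosyzygy A d M X ∧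
    ∃ Q, IsMinimalInjectiveCogenerator A Q ∧
      ∃ M' : ModuleCat.{0} A, Module.Finite A ↥M' ∧
        ∃ X', IsNthCosyzygy A (d + 1) M' X' ∧ InAdd A X (ModuleCat.of A (↥Q × ↥X'))

/-- The desuspending level `des M ∈ ℕ∞`. -/
def desLevel (M : ModuleCat.{0} A) : ℕ∞ :=
  sInf {d : ℕ∞ | ∃ n : ℕ, d = n ∧ DesLE A n M}

/-- The desuspending level of the algebra. -/
def desAlg : ℕ∞ :=
  sSup {d : ℕ∞ | ∃ S : ModuleCat.{0} A, IsSimpleModule A ↥S ∧ desLevel A S = d}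

/-- The (small) finitistic projective dimension `fin-pro A`. -/
def finProDim : ℕ∞ :=
  sSup {d : ℕ∞ | ∃ M : ModuleCat.{0} A, Module.Finite A ↥M ∧ projDim A M = d ∧ d ≠ ⊤}

/-- The (small) finitistic injective dimension `fin-inj A`. -/
def finInjDim : ℕ∞ :=
  sSup {d : ℕ∞ | ∃ M : ModuleCat.{0} A, Module.Finite A ↥M ∧ injDim A M = d ∧ d ≠ ⊤}

/-- The big finitistic projective dimension `Fin-pro A`. -/
def bigFinProDim : ℕ∞ :=
  sSup {d : ℕ∞ | ∃ M : ModuleCat.{0} A, projDim A M = d ∧ d ≠ ⊤}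

/-- The big finitistic injective dimension `Fin-inj A`. -/
def bigFinInjDim : ℕ∞ :=
  sSup {d : ℕ∞ | ∃ M : ModuleCat.{0} A, injDim A M = d ∧ d ≠ ⊤}

/-- `M` is an indecomposable nonzero module. -/
def Indec (M : ModuleCat.{0} A) : Prop :=
  Nontrivial ↥M ∧ ∀ (N₁ N₂ : Submodule A ↥M), IsCompl N₁ N₂ → N₁ = ⊥ ∨ N₂ = ⊥

/-- `M` is serial (uniserial): its submodules form a chain. -/
def IsUniserial (M : ModuleCat.{0} A) : Prop :=
  ∀ N₁ N₂ : Submodule A ↥M, N₁ ≤ N₂ ∨ N₂ ≤ N₁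

/-- `A` is a Nakayama algebra: all finitely generated indecomposable modules are serial. -/
def IsNakayama : Prop :=
  ∀ M : ModuleCat.{0} A, Module.Finite A ↥M → Indec A M → IsUniserial A M

/-- `A` is connected: it is not a nontrivial product of algebras. -/
def IsConnectedAlgebra : Prop :=
  Nontrivial A ∧ ∀ e : A, IsIdempotentElem e → e ∈ Set.center A → e = 0 ∨ e = 1

/-- `A` is a cyclic Nakayama algebra: connected Nakayama with no simple projective module. -/
def IsCyclicNakayama : Prop :=
  IsNakayama A ∧ IsConnectedAlgebra A ∧
    ¬ ∃ S : ModuleCat.{0} A, IsSimpleModule A ↥S ∧ Projective S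

/-- `T ≅ top M` (and `top M` is simple): there is an essential epimorphism `M ⟶ T`. -/
def IsSimpleTopOf (M T : ModuleCat.{0} A) : Prop :=
  IsSimpleModule A ↥T ∧
    ∃ f : M ⟶ T, Epi f ∧ ∀ (N : ModuleCat.{0} A) (g : N ⟶ M), Epi (g ≫ f) → Epi g

/-- `S ≅ soc M` (and `soc M` is simple): there is an essential monomorphism `S ⟶ M`. -/
def IsSimpleSocOf (M S : ModuleCat.{0} A) : Prop :=
  IsSimpleModule A ↥S ∧
    ∃ f : S ⟶ M, Mono f ∧ ∀ (N : ModuleCat.{0} A) (g : M ⟶ N), Mono (f ≫ g) → Mono g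

/-- `0 ⟶ N ⟶ E ⟶ M ⟶ 0` is an almost split (Auslander-Reiten) sequence. -/
def IsAlmostSplitSeq {N E M : ModuleCat.{0} A} (f : N ⟶ E) (g : E ⟶ M) : Prop :=
  Mono f ∧ Epi g ∧ (∃ w : f ≫ g = 0, (ShortComplex.mk f g w).Exact) ∧
  (¬ ∃ s : M ⟶ E, s ≫ g = 𝟙 M) ∧ Indec A N ∧ Indec A M ∧
  ∀ (X : ModuleCat.{0} A) (h : X ⟶ M), (¬ ∃ s : M ⟶ X, s ≫ h = 𝟙 M) → ∃ h' : X ⟶ E, h' ≫ g = h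

/-- `N ≅ τ M`, the Auslander-Reiten translate of `M` : there is an almost split sequence
`0 ⟶ N ⟶ E ⟶ M ⟶ 0`. -/
def IsTauOf (N M : ModuleCat.{0} A) : Prop :=
  ∃ (E : ModuleCat.{0} A) (f : N ⟶ E) (g : E ⟶ M), IsAlmostSplitSeq A f g

/-- `U ≅ ψ S = τ⁻ top (I S)`. -/
def IsPsiOf (S U : ModuleCat.{0} A) : Prop :=
  ∃ I, IsInjEnvOf A S I ∧ ∃ T, IsSimpleTopOf A I T ∧ IsTauOf A T U

/-- `T ≅ γ S = τ soc (P S)`. -/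
def IsGammaOf (S T : ModuleCat.{0} A) : Prop :=
  ∃ P, IsProjCoverOf A S P ∧ ∃ U, IsSimpleSocOf A P U ∧ IsTauOf A T U

/-- `T ≅ φ S = top (I S)`. -/
def IsPhiOf (S T : ModuleCat.{0} A) : Prop :=
  ∃ I, IsInjEnvOf A S I ∧ IsSimpleTopOf A I T

/-- There is a `ψ`-path `(S_1, …, S_m)` of cardinality `m` ending in `S`. -/
def PsiPathTo (m : ℕ) (S : ModuleCat.{0} A) : Prop :=
  1 ≤ m ∧ ∃ c : ℕ → ModuleCat.{0} A,
    (∀ i < m, IsSimpleModule A ↥(c i)) ∧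
    (∀ i, i + 1 < m → IsPsiOf A (c i) (c (i + 1))) ∧
    Nonempty (c (m - 1) ≅ S)

/-- `a(S)`: the supremum of the cardinalities of `ψ`-paths ending in `S`. -/
def aVal (S : ModuleCat.{0} A) : ℕ∞ :=
  sSup {d : ℕ∞ | ∃ m : ℕ, d = m ∧ PsiPathTo A m S}

/-- `a(A)`: the maximum of `a(S)` over the simple modules which are not `ψ`-cyclic. -/
def aAlg : ℕ∞ :=
  sSup {d : ℕ∞ | ∃ S : ModuleCat.{0} A, IsSimpleModule A ↥S ∧ aVal A S ≠ ⊤ ∧ aVal A S = d}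

/-- `S` is a composition factor of `M`: a simple subquotient of `M`. -/
def IsCompFactorOf (S M : ModuleCat.{0} A) : Prop :=
  IsSimpleModule A ↥S ∧ ∃ N' N : Submodule A ↥M, N' ≤ N ∧
    Nonempty ((↥N ⧸ N'.comap N.subtype) ≃ₗ[A] ↥S)

/-- `e(S) = min {pd S, pd (I S)} = x`. -/
def ERelVal (S : ModuleCat.{0} A) (x : ℕ∞) : Prop :=
  ∃ I, IsInjEnvOf A S I ∧ x = min (projDim A S) (projDim A I)

/-- `e*(S) = min {id S, id (P S)} = x`. -/
def EStarVal (S : ModuleCat.{0} A) (x : ℕ∞) : Prop :=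
  ∃ P, IsProjCoverOf A S P ∧ x = min (injDim A S) (injDim A P)

/-- `T = h(S) = top (Ω^{e(S)} N S)`, the homological permutation. -/
def HRel (S T : ModuleCat.{0} A) : Prop :=
  IsSimpleModule A ↥S ∧ IsSimpleModule A ↥T ∧
  ∃ z : ℕ, ERelVal A S z ∧
    ∃ N, ((Odd z ∧ N = S) ∨ (Even z ∧ IsInjEnvOf A S N)) ∧
      ∃ X, IsNthSyzygy A z N X ∧ IsSimpleTopOf A X T

/-- `S = h*(T) = soc (Σ^{e*(T)} N* T)`, the inverse homological permutation. -/
def HStarRel (T S : ModuleCat.{0} A) : Prop :=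
  IsSimpleModule A ↥T ∧ IsSimpleModule A ↥S ∧
  ∃ z : ℕ, EStarVal A T z ∧
    ∃ N, ((Odd z ∧ N = T) ∨ (Even z ∧ IsProjCoverOf A T N)) ∧
      ∃ X, IsNthCosyzygy A z N X ∧ IsSimpleSocOf A X S

/-- The `t`-fold relational iterate of a relation on modules (up to isomorphism). -/
def IterRel (r : ModuleCat.{0} A → ModuleCat.{0} A → Prop) :
    ℕ → ModuleCat.{0} A → ModuleCat.{0} A → Prop
  | 0, X, Y => Nonempty (X ≅ Y)
  | n + 1, X, Y => ∃ Z, r X Z ∧ IterRel r n Z Y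

end ArtinAlg

namespace ArtinAlg

open Abelian in
/-- Vanishing of `Ext^k(X, N)`. -/
def ExtVan (A : Type) [Ring A] (N : ModuleCat.{0} A) (k : ℕ) (X : ModuleCat.{0} A) : Prop :=
  ∀ e : Abelian.Ext.{0} X N k, e = 0

variable {A : Type} [Ring A] {N : ModuleCat.{0} A}

lemma extVan_of_sum {ι : Type} (s : Finset ι) {k : ℕ} {X : ModuleCat.{0} A}
    (Y : ι → ModuleCat.{0} A) (f : ∀ j, X ⟶ Y j) (g : ∀ j, Y j ⟶ X)
    (h : ∑ j ∈ s, f j ≫ g j = 𝟙 X) (hY : ∀ j, ExtVan A N k (Y j)) : ExtVan A N k X := by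
  intro e
  have h1 : ∀ t : Finset ι,
      (Abelian.Ext.mk₀ (∑ j ∈ t, f j ≫ g j)).comp e (zero_add k) = 0 := by
    classical
    intro t
    induction t using Finset.induction_on with
    | empty => simp
    | insert a t ha ih =>
      rw [Finset.sum_insert ha, Abelian.Ext.mk₀_add, Abelian.Ext.add_comp, ih, add_zero,
        ← Abelian.Ext.mk₀_comp_mk₀_assoc, hY a ((Abelian.Ext.mk₀ (g a)).comp e (zero_add k)),
        Abelian.Ext.comp_zero]
  have := h1 s
  rwa [h, Abelian.Ext.mk₀_id_comp] at this

lemma extVan_retract {k : ℕ} {X Y : ModuleCat.{0} A} (i : X ⟶ Y) (r : Y ⟶ X)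
    (h : i ≫ r = 𝟙 X) (hY : ExtVan A N k Y) : ExtVan A N k X :=
  extVan_of_sum (ι := Unit) {()} (fun _ => Y) (fun _ => i) (fun _ => r) (by simpa using h)
    (fun _ => hY)

lemma extVan_iso {k : ℕ} {X Y : ModuleCat.{0} A} (e : X ≅ Y) (hY : ExtVan A N k Y) :
    ExtVan A N k X := extVan_retract e.hom e.inv (by simp) hY

lemma extVan_proj {k : ℕ} (hk : 1 ≤ k) {P : ModuleCat.{0} A} (hP : Projective P) :
    ExtVan A N k P := by
  obtain ⟨k, rfl⟩ : ∃ j, k = j + 1 := ⟨k - 1, by omega⟩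
  intro e
  exact e.eq_zero_of_projective

lemma extVan_prod {k : ℕ} {X Y : Type} [AddCommGroup X] [AddCommGroup Y] [Module A X] [Module A Y]
    (hX : ExtVan A N k (ModuleCat.of A X)) (hY : ExtVan A N k (ModuleCat.of A Y)) :
    ExtVan A N k (ModuleCat.of A (X × Y)) := by
  refine extVan_of_sum (ι := Bool) Finset.univ
    (fun b => match b with | true => ModuleCat.of A X | false => ModuleCat.of A Y)
    (fun b => match b with
      | true => ModuleCat.ofHom (LinearMap.fst A X Y)
      | false => ModuleCat.ofHom (LinearMap.snd A X Y))
    (fun b => match b with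
      | true => ModuleCat.ofHom (LinearMap.inl A X Y)
      | false => ModuleCat.ofHom (LinearMap.inr A X Y)) ?_ ?_
  · rw [Fintype.sum_bool]
    ext x <;> simp
  · rintro (_ | _)
    exacts [hY, hX]

lemma extVan_pi {k n : ℕ} {X : Type} [AddCommGroup X] [Module A X]
    (hX : ExtVan A N k (ModuleCat.of A X)) :
    ExtVan A N k (ModuleCat.of A (Fin n → X)) := by
  refine extVan_of_sum (ι := Fin n) Finset.univ
    (fun _ => ModuleCat.of A X)
    (fun j => ModuleCat.ofHom (LinearMap.proj j))
    (fun j => ModuleCat.ofHom (LinearMap.single A (fun _ => X) j)) ?_ (fun _ => hX)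
  apply ModuleCat.hom_ext
  rw [ModuleCat.hom_sum]
  ext x j
  simp [LinearMap.sum_apply, Finset.sum_apply, Pi.single_apply]

lemma shortExact_kernel {P M : ModuleCat.{0} A} (f : P ⟶ M) (hf : Epi f) :
    (ShortComplex.mk (kernel.ι f) f (kernel.condition f)).ShortExact where
  exact := ShortComplex.exact_kernel f

lemma extVan_syzygy {k : ℕ} (hk : 1 ≤ k) {M X : ModuleCat.{0} A} (h : IsSyzygyOf A M X) :
    ExtVan A N (k + 1) M ↔ ExtVan A N k X := by
  obtain ⟨P, f, ⟨hP, hf, -⟩, ⟨i⟩⟩ := h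
  have hS := shortExact_kernel f hf
  constructor
  · intro hM
    refine extVan_iso i ?_
    intro x
    obtain ⟨y, rfl⟩ := Abelian.Ext.contravariant_sequence_exact₁ hS N x (n₁ := k + 1)
      (by omega) (hM _)
    rw [extVan_proj hk hP y, Abelian.Ext.comp_zero]
  · intro hX x
    have hK := extVan_iso i.symm hX
    obtain ⟨y, rfl⟩ := Abelian.Ext.contravariant_sequence_exact₃ hS N x
      (extVan_proj (by omega) hP _) (n₀ := k) (by omega)
    rw [hK y, Abelian.Ext.comp_zero]

lemma extVan_nthSyzygy {k : ℕ} (hk : 1 ≤ k) (n : ℕ) {M X : ModuleCat.{0} A}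
    (h : IsNthSyzygy A n M X) :
    ExtVan A N (k + n) M ↔ ExtVan A N k X := by
  induction n generalizing M with
  | zero =>
    obtain ⟨i⟩ := h
    exact ⟨extVan_iso i, extVan_iso i.symm⟩
  | succ n ih =>
    obtain ⟨Y, hY, hX⟩ := h
    rw [← ih hX, ← extVan_syzygy (by omega) hY]
    rfl

lemma InjDimLE.hasInjectiveDimensionLT {n : ℕ} (h : InjDimLE A n N) :
    HasInjectiveDimensionLT N (n + 1) := by
  induction h with
  | zero M h => infer_instance
  | succ n M I f hI hf h ih =>
    have hS : (ShortComplex.mk f (cokernel.π f) (cokernel.condition f)).ShortExact :=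
      { exact := ShortComplex.exact_cokernel f }
    exact hS.hasInjectiveDimensionLT_X₁ (n + 1) ih
      (hasInjectiveDimensionLT_of_ge I 1 (n + 1 + 1) (by omega))

lemma injDimLE_of_injDim {d : ℕ} (h : injDim A N = d) : InjDimLE A d N := by
  have hne : {x : ℕ∞ | ∃ n : ℕ, x = n ∧ InjDimLE A n N}.Nonempty := by
    by_contra hc
    rw [Set.not_nonempty_iff_eq_empty] at hc
    rw [injDim, hc, sInf_empty] at h
    exact ENat.top_ne_coe d h
  obtain ⟨n, hn, h'⟩ := csInf_mem hne
  have : (d : ℕ∞) = n := h.symm.trans hn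
  rw [ENat.coe_inj.mp this]
  exact h'

lemma subsingleton_ext_of_extVan {d : ℕ} (hd : 1 ≤ d) {M : ModuleCat.{0} A}
    (h : ExtVan A N d M) :
    Subsingleton ↥(((Ext ℤ (ModuleCat.{0} A) d).obj (Opposite.op M)).obj N) := by
  obtain ⟨p, rfl⟩ : ∃ p, d = p + 1 := ⟨d - 1, by omega⟩
  let P := projectiveResolution M
  rw [← ModuleCat.isZero_iff_subsingleton]
  refine IsZero.of_iso ?_ (P.isoExt (p + 1) N)
  rw [← HomologicalComplex.exactAt_iff_isZero_homology,
    HomologicalComplex.exactAt_iff' _ p (p + 1) (p + 2) (by simp) (by simp),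
    ShortComplex.moduleCat_exact_iff]
  intro (x : P.complex.X (p + 1) ⟶ N) hx
  have hx' : P.complex.d (p + 2) (p + 1) ≫ x = 0 := hx
  obtain ⟨g, hg⟩ := (P.extMk_eq_zero_iff x (p + 2) rfl hx' p rfl).1 (h _)
  exact ⟨g, hg⟩

end ArtinAlg

open ArtinAlg in
/-- Let `A` be an artin algebra and `M` a finitely generated `A`-module.
If there exists a (not necessarily finitely generated) module `N` of finite injective
dimension `d ≥ 1` such that `Ext^d(M, N) ≠ 0`, then `d ≤ del M`. -/
theorem statement_0 (R : Type) [CommRing R] [IsArtinianRing R]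
    (A : Type) [Ring A] [Algebra R A] [Module.Finite R A]
    (M : ModuleCat.{0} A) (hM : Module.Finite A ↥M)
    (d : ℕ) (hd : 1 ≤ d) (N : ModuleCat.{0} A) (hN : injDim A N = d)
    (hExt : Nontrivial ↥(((Ext ℤ (ModuleCat.{0} A) d).obj (Opposite.op M)).obj N)) :
    (d : ℕ∞) ≤ delLevel A M := by
  have hI : HasInjectiveDimensionLT N (d + 1) :=
    (injDimLE_of_injDim hN).hasInjectiveDimensionLT
  refine le_sInf ?_
  rintro _ ⟨n, rfl, X, hX, M', -, X', hX', m, i, r, hir⟩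
  rw [Nat.cast_le]
  by_contra! hlt
  obtain ⟨k, rfl⟩ : ∃ k, d = k + n := ⟨d - n, by omega⟩
  have hk : 1 ≤ k := by omega
  have h1 : ExtVan A N (k + (n + 1)) M' := fun e =>
    e.eq_zero_of_hasInjectiveDimensionLT (k + n + 1) (by omega)
  have h2 : ExtVan A N k X' := (extVan_nthSyzygy hk (n + 1) hX').1 h1
  have hA : ExtVan A N k (ModuleCat.of A A) :=
    extVan_proj hk (ModuleCat.projective_of_free (Module.Basis.singleton Unit A))
  have h3 : ExtVan A N k X := extVan_retract i r hir (extVan_pi (extVan_prod hA h2))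
  have h4 := subsingleton_ext_of_extVan hd ((extVan_nthSyzygy hk n hX).2 h3)
  exact not_subsingleton _ h4
end
end

section
/- Let A be an artin algebra. If X is a submodule of a finitely generated module Y, then del X ≤ pd Y. -/
open CategoryTheory CategoryTheory.Limits

noncomputable section

namespace DelProof

/-- Generic (not necessarily minimal) finitely generated `n`-th syzygies. -/
def FgSyz (A : Type) [Ring A] : ℕ → ModuleCat.{0} A → ModuleCat.{0} A → Prop
  | 0, M, X => Nonempty (X ≅ M)
  | n + 1, M, X => ∃ (P : ModuleCat.{0} A) (g : P →ₗ[A] M), Function.Surjective g ∧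
      Module.Finite A P ∧ Module.Projective A P ∧
      FgSyz A n (ModuleCat.of A (LinearMap.ker g)) X

/-- `X` is a direct summand of `L × F` with `F` finitely generated projective. -/
def StSummand (A : Type) [Ring A] (X L : Type) [AddCommGroup X] [Module A X]
    [AddCommGroup L] [Module A L] : Prop :=
  ∃ (F : ModuleCat.{0} A) (i : X →ₗ[A] (L × F)) (r : (L × F) →ₗ[A] X),
    Module.Finite A F ∧ Module.Projective A F ∧ ∀ x, r (i x) = x

section
variable {A : Type} [Ring A]

/-- A form of Schanuel's lemma. -/
lemma schanuel {X P Z Q : Type} [AddCommGroup X] [Module A X] [AddCommGroup P] [Module A P]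
    [AddCommGroup Z] [Module A Z] [AddCommGroup Q] [Module A Q]
    [Module.Finite A P] [Module.Projective A P] [Module.Projective A Q]
    (f : X →ₗ[A] P) (g : P →ₗ[A] Z) (hf : Function.Injective f) (hfg : Function.Exact f g)
    (hg : Function.Surjective g) (q : Q →ₗ[A] Z) (hq : Function.Surjective q) :
    StSummand A X (LinearMap.ker q) := by
  obtain ⟨a, ha⟩ := Module.projective_lifting_property q g hq
  obtain ⟨c, hc⟩ := Module.projective_lifting_property g q hg
  have ha' : ∀ x, q (a x) = g x := fun x => LinearMap.congr_fun ha x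
  have hc' : ∀ x, g (c x) = q x := fun x => LinearMap.congr_fun hc x
  let e : X ≃ₗ[A] LinearMap.range f := LinearEquiv.ofInjective f hf
  have hr : ∀ y, g y = 0 → y ∈ LinearMap.range f := fun y hy => (hfg y).1 hy
  have hgf : ∀ x, g (f x) = 0 := fun x => (hfg (f x)).2 ⟨x, rfl⟩
  let i : X →ₗ[A] (LinearMap.ker q × P) :=
    LinearMap.prod (LinearMap.codRestrict _ (a ∘ₗ f) (by
      intro x; simp [ha', hgf])) f
  let s : (LinearMap.ker q × P) →ₗ[A] P :=
    c ∘ₗ (LinearMap.ker q).subtype ∘ₗ LinearMap.fst A _ _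
      - (c ∘ₗ a - LinearMap.id) ∘ₗ LinearMap.snd A _ _
  let r : (LinearMap.ker q × P) →ₗ[A] X :=
    e.symm.toLinearMap ∘ₗ LinearMap.codRestrict (LinearMap.range f) s (by
      rintro ⟨⟨z, hz⟩, p⟩
      apply hr
      rw [LinearMap.mem_ker] at hz
      simp [s, hc', ha', hz])
  refine ⟨ModuleCat.of A P, i, r, ‹_›, ‹_›, fun x => ?_⟩
  have : r (i x) = e.symm (e x) := by
    simp only [r, LinearMap.comp_apply, LinearEquiv.coe_coe]
    congr 1
    apply Subtype.ext
    simp [s, i, e]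
  rw [this, e.symm_apply_apply]

lemma pd_of_projDimLE (n : ℕ) (M : ModuleCat.{0} A) (h : ArtinAlg.ProjDimLE A n M) :
    HasProjectiveDimensionLT M (n + 1) := by
  induction h with
  | zero M h => exact projective_iff_hasProjectiveDimensionLT_one.1 h
  | succ n M P f hP hf h ih =>
    have hS : (ShortComplex.mk (kernel.ι f) f (kernel.condition f)).ShortExact :=
      { exact := ShortComplex.exact_of_f_is_kernel _ (kernelIsKernel f)
        mono_f := inferInstance
        epi_g := hf }
    exact (hS.hasProjectiveDimensionLT_X₃_iff n hP).2 ih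

lemma pd_ker {P Y : Type} [AddCommGroup P] [Module A P] [AddCommGroup Y] [Module A Y]
    [Module.Projective A P] (g : P →ₗ[A] Y) (hg : Function.Surjective g) (n : ℕ)
    (h : HasProjectiveDimensionLT (ModuleCat.of A Y) (n + 2)) :
    HasProjectiveDimensionLT (ModuleCat.of A (LinearMap.ker g)) (n + 1) := by
  have hS := LinearMap.shortExact_shortComplexKer hg
  refine (hS.hasProjectiveDimensionLT_X₃_iff n ?_).1 h
  exact (IsProjective.iff_projective (R := A) P).1 inferInstance

lemma main_aux [IsNoetherianRing A] (n : ℕ) : ∀ (X Y Z Xn Zn : ModuleCat.{0} A)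
    (f : X →ₗ[A] Y) (g : Y →ₗ[A] Z), Function.Injective f → Function.Exact f g →
    Function.Surjective g → Module.Finite A Y →
    HasProjectiveDimensionLT Y (n + 1) → FgSyz A n X Xn → FgSyz A (n + 1) Z Zn →
    StSummand A Xn Zn := by
  induction n with
  | zero =>
    rintro X Y Z Xn Zn f g hf hfg hg hY hpd ⟨e⟩ ⟨Q, q, hq, hQ, hQ', ⟨e'⟩⟩
    have h1 : Module.Projective A Y :=
      (IsProjective.iff_projective (R := A) Y).2 (projective_iff_hasProjectiveDimensionLT_one.2 hpd)
    obtain ⟨F, i, r, hF, hF', hir⟩ := schanuel f g hf hfg hg q hq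
    let E := e.toLinearEquiv
    let E' := e'.toLinearEquiv
    refine ⟨F, (LinearMap.prodMap E'.symm.toLinearMap LinearMap.id) ∘ₗ i ∘ₗ E.toLinearMap,
      E.symm.toLinearMap ∘ₗ r ∘ₗ (LinearMap.prodMap E'.toLinearMap LinearMap.id), hF, hF',
      fun x => ?_⟩
    have : (LinearMap.prodMap E'.toLinearMap LinearMap.id)
        ((LinearMap.prodMap E'.symm.toLinearMap LinearMap.id) (i (E x))) = i (E x) := by
      apply Prod.ext
      · exact E'.apply_symm_apply _
      · rfl
    simp only [LinearMap.comp_apply, LinearEquiv.coe_coe]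
    rw [this, hir, E.symm_apply_apply]
  | succ n ih =>
    rintro X Y Z Xn Zn f g hf hfg hg hY hpd ⟨P, p, hp, hP, hP', hXn⟩ ⟨Q, q, hq, hQ, hQ', hZn⟩
    obtain ⟨σ, hσ⟩ := Module.projective_lifting_property g q hg
    have hσ' : ∀ x, g (σ x) = q x := fun x => LinearMap.congr_fun hσ x
    have hgf : ∀ x, g (f x) = 0 := fun x => (hfg (f x)).2 ⟨x, rfl⟩
    let π : (P × Q) →ₗ[A] Y := LinearMap.coprod (f ∘ₗ p) σ
    have hπ : ∀ a b, π (a, b) = f (p a) + σ b := fun a b => by simp [π]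
    have hπs : Function.Surjective π := by
      intro y
      obtain ⟨b, hb⟩ := hq (g y)
      obtain ⟨x, hx⟩ := (hfg (y - σ b)).1 (by simp [hσ', hb])
      obtain ⟨a, rfl⟩ := hp x
      exact ⟨(a, b), by rw [hπ, hx]; abel⟩
    let F : LinearMap.ker p →ₗ[A] LinearMap.ker π :=
      LinearMap.codRestrict _ (LinearMap.inl A P Q ∘ₗ (LinearMap.ker p).subtype) (by
        rintro ⟨x, hx⟩
        rw [LinearMap.mem_ker] at hx
        simp [π, hx])
    let G : LinearMap.ker π →ₗ[A] LinearMap.ker q :=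
      LinearMap.codRestrict _ (LinearMap.snd A P Q ∘ₗ (LinearMap.ker π).subtype) (by
        rintro ⟨⟨a, b⟩, hx⟩
        rw [LinearMap.mem_ker, hπ] at hx
        have := congrArg g hx
        rw [map_add, hgf, hσ', zero_add, map_zero] at this
        simpa using this)
    refine ih (ModuleCat.of A (LinearMap.ker p)) (ModuleCat.of A (LinearMap.ker π))
      (ModuleCat.of A (LinearMap.ker q)) Xn Zn F G ?_ ?_ ?_ ?_ ?_ hXn hZn
    · rintro ⟨x, hx⟩ ⟨y, hy⟩ h
      have := congrArg (fun t => t.1.1) h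
      exact Subtype.ext this
    · rintro ⟨⟨a, b⟩, hx⟩
      constructor
      · intro h
        have hb : b = 0 := congrArg Subtype.val h
        subst hb
        rw [LinearMap.mem_ker, hπ, map_zero, add_zero] at hx
        exact ⟨⟨a, hf (by rw [hx, map_zero])⟩, rfl⟩
      · rintro ⟨⟨y, hy⟩, h⟩
        have hb : 0 = b := congrArg (fun t => t.1.2) h
        exact Subtype.ext hb.symm
    · rintro ⟨b, hb⟩
      rw [LinearMap.mem_ker] at hb
      obtain ⟨x, hx⟩ := (hfg (σ b)).1 (by rw [hσ', hb])
      obtain ⟨a, rfl⟩ := hp x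
      exact ⟨⟨(-a, b), by rw [LinearMap.mem_ker, hπ, map_neg, map_neg, hx]; abel⟩, rfl⟩
    · show Module.Finite A (LinearMap.ker π)
      infer_instance
    · exact pd_ker π hπs n hpd

lemma exists_cover [IsArtinianRing A] [IsNoetherianRing A] (M : ModuleCat.{0} A)
    [Module.Finite A M] : ∃ (P : ModuleCat.{0} A) (f : P ⟶ M),
      Module.Finite A P ∧ ArtinAlg.IsProjectiveCoverHom A f := by
  obtain ⟨n, f, hf⟩ := Module.Finite.exists_fin' A M
  let S : Set (Submodule A (Fin n → A)) :=
    {N | Module.Projective A N ∧ Function.Surjective (f ∘ₗ N.subtype)}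
  have hS : S.Nonempty := by
    refine ⟨⊤, Module.Projective.of_equiv (Submodule.topEquiv (R := A) (M := Fin n → A)).symm, ?_⟩
    intro m
    obtain ⟨x, hx⟩ := hf m
    exact ⟨⟨x, trivial⟩, hx⟩
  obtain ⟨N, ⟨hN, hNs⟩, hmin⟩ := WellFounded.has_min (wellFounded_lt (α := Submodule A (Fin n → A))) S hS
  let h : N →ₗ[A] M := f ∘ₗ N.subtype
  refine ⟨ModuleCat.of A N, ModuleCat.ofHom h, ?_, ?_, ?_, ?_⟩
  · show Module.Finite A N
    infer_instance
  · exact (IsProjective.iff_projective (R := A) N).1 hN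
  · exact (ModuleCat.epi_iff_surjective _).2 hNs
  · intro L g hg
    rw [ModuleCat.epi_iff_surjective] at hg ⊢
    obtain ⟨t, ht⟩ := Module.projective_lifting_property (h ∘ₗ g.hom) h hg
    let φ : Module.End A N := g.hom ∘ₗ t
    have hφ : ∀ x, h (φ x) = h x := fun x => LinearMap.congr_fun ht x
    have hφk : ∀ k x, h ((φ ^ k) x) = h x := by
      intro k
      induction k with
      | zero => intro x; simp
      | succ k ih => intro x; rw [pow_succ, Module.End.mul_apply, ih, hφ]
    obtain ⟨k, hk⟩ := Filter.eventually_atTop.mp (LinearMap.eventually_isCompl_ker_pow_range_pow φ)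
    have hc := hk (k + 1) (by omega)
    let I : Submodule A N := LinearMap.range (φ ^ (k + 1))
    have hI : Module.Projective A I :=
      Module.Projective.of_split I.subtype (Submodule.projectionOnto I _ hc.symm)
        (Submodule.projectionOnto_comp_subtype hc.symm)
    have hmem : I.map N.subtype ∈ S := by
      refine ⟨Module.Projective.of_equiv (Submodule.equivMapOfInjective N.subtype N.subtype_injective I), ?_⟩
      intro m
      obtain ⟨x, hx⟩ := hNs m
      refine ⟨⟨((φ ^ (k+1)) x : N), ⟨_, ⟨x, rfl⟩, rfl⟩⟩, ?_⟩
      exact (hφk (k+1) x).trans hx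
    have hle : I.map N.subtype ≤ N := Submodule.map_subtype_le N I
    have heq : I.map N.subtype = N := by
      by_contra hne
      exact hmin _ hmem (lt_of_le_of_ne hle hne)
    intro y
    have hy : (y : Fin n → A) ∈ I.map N.subtype := by rw [heq]; exact y.2
    obtain ⟨z, ⟨x, hx⟩, hz⟩ := hy
    have hzy : z = y := Subtype.ext hz
    refine ⟨t ((φ ^ k) x), ?_⟩
    rw [← hzy, ← hx, pow_succ', Module.End.mul_apply]
    rfl

lemma exists_syz [IsArtinianRing A] [IsNoetherianRing A] (n : ℕ) : ∀ (M : ModuleCat.{0} A),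
    Module.Finite A M → ∃ X, ArtinAlg.IsNthSyzygy A n M X ∧ FgSyz A n M X := by
  induction n with
  | zero => exact fun M _ => ⟨M, ⟨Iso.refl _⟩, ⟨Iso.refl _⟩⟩
  | succ n ih =>
    intro M hM
    obtain ⟨P, f, hP, hf⟩ := exists_cover M
    obtain ⟨X, hX, hX'⟩ := ih (ModuleCat.of A (LinearMap.ker f.hom)) (by
      show Module.Finite A (LinearMap.ker f.hom)
      infer_instance)
    exact ⟨X, ⟨_, ⟨P, f, hf, ⟨(ModuleCat.kernelIsoKer f).symm⟩⟩, hX⟩, P, f.hom,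
      (ModuleCat.epi_iff_surjective f).1 hf.2.1, hP,
      (IsProjective.iff_projective (R := A) P).2 hf.1, hX'⟩

lemma inAdd_of_stSummand (X L : ModuleCat.{0} A) (h : StSummand A X L) :
    ArtinAlg.InAdd A X (ModuleCat.of A (A × L)) := by
  obtain ⟨F, i, r, hF, hF', hir⟩ := h
  obtain ⟨m, t, s, -, -, hts⟩ := Module.Finite.exists_comp_eq_id_of_projective A F
  have hts' : ∀ x, t (s x) = x := fun x => LinearMap.congr_fun hts x
  let u : (L × F) →ₗ[A] (Fin (m + 1) → A × L) :=
    LinearMap.pi (Fin.cons (LinearMap.inr A A L ∘ₗ LinearMap.fst A L F)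
      (fun j => LinearMap.inl A A L ∘ₗ LinearMap.proj j ∘ₗ s ∘ₗ LinearMap.snd A L F))
  let v : (Fin (m + 1) → A × L) →ₗ[A] (L × F) :=
    LinearMap.prod (LinearMap.snd A A L ∘ₗ LinearMap.proj 0)
      (t ∘ₗ LinearMap.pi (fun j => LinearMap.fst A A L ∘ₗ LinearMap.proj j.succ))
  have huv : ∀ x, v (u x) = x := by
    rintro ⟨l, x⟩
    apply Prod.ext
    · simp [u, v]
    · have : (fun j => s x j) = s x := rfl
      refine Eq.trans ?_ (hts' x)
      show t _ = t _
      congr 1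
  refine ⟨m + 1, ModuleCat.ofHom (u ∘ₗ i), ModuleCat.ofHom (r ∘ₗ v), ?_⟩
  ext x
  show r (v (u (i x))) = x
  rw [huv, hir]

end

end DelProof

open ArtinAlg in
/-- Let `A` be an artin algebra. If `X` is a submodule of a finitely
generated module `Y`, then `del X ≤ pd Y`. -/
theorem statement_2 (R : Type) [CommRing R] [IsArtinianRing R]
    (A : Type) [Ring A] [Algebra R A] [Module.Finite R A]
    (X Y : ModuleCat.{0} A) (hY : Module.Finite A ↥Y)
    (f : X ⟶ Y) (hf : CategoryTheory.Mono f) :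
    delLevel A X ≤ projDim A Y := by
  have hA : IsArtinianRing A := isArtinian_of_tower R inferInstance
  have hN : IsNoetherianRing A := isNoetherian_of_tower R inferInstance
  refine le_sInf ?_
  rintro d ⟨n, rfl, hn⟩
  refine sInf_le ⟨n, rfl, ?_⟩
  have hfi : Function.Injective f.hom := (ModuleCat.mono_iff_injective f).1 hf
  have hX : Module.Finite A X := Module.Finite.of_injective f.hom hfi
  let Z : ModuleCat.{0} A := ModuleCat.of A (Y ⧸ LinearMap.range f.hom)
  have hZ : Module.Finite A Z := by
    show Module.Finite A (Y ⧸ LinearMap.range f.hom)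
    infer_instance
  obtain ⟨Xn, h1, h2⟩ := DelProof.exists_syz n X hX
  obtain ⟨Zn, h3, h4⟩ := DelProof.exists_syz (n + 1) Z hZ
  refine ⟨Xn, h1, Z, hZ, Zn, h3, DelProof.inAdd_of_stSummand _ _ ?_⟩
  exact DelProof.main_aux n X Y Z Xn Zn f.hom (LinearMap.range f.hom).mkQ hfi
    (LinearMap.exact_map_mkQ_range f.hom) (Submodule.mkQ_surjective _) hY
    (DelProof.pd_of_projDimLE n Y hn) h2 h4
end
end

section
/- Let A be an artin algebra and assume that every simple module S is a submodule of a finitely generated module M_S of finite projective dimension. Let d = max over simple S of pd M_S. Then Fin-inj A ≤ del A ≤ d ≤ fin-pro A. -/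
open CategoryTheory CategoryTheory.Limits

noncomputable section

namespace ArtinAlg.Aux

open CategoryTheory.Abelian

section cover

variable {A : Type} [Ring A] [IsArtinianRing A]

/-- Existence of projective covers for finitely generated modules over an artinian ring. -/
lemma exists_cover (M : Type) [AddCommGroup M] [Module A M] [Module.Finite A M] :
    ∃ (P : Type) (_ : AddCommGroup P) (_ : Module A P) (f : P →ₗ[A] M),
      Module.Finite A P ∧ Module.Projective A P ∧ Function.Surjective f ∧
      ∀ N : Submodule A P, N.map f = ⊤ → N = ⊤ := by
  obtain ⟨n, π, hπ⟩ := Module.Finite.exists_fin' A M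
  let s : Set (Submodule A (Fin n → A)) := {Q | Module.Projective A Q ∧ Q.map π = ⊤}
  have hs : s.Nonempty := by
    refine ⟨⊤, Module.Projective.of_equiv Submodule.topEquiv.symm, ?_⟩
    rw [Submodule.map_top, LinearMap.range_eq_top]
    exact hπ
  obtain ⟨Q, ⟨hQ, hQπ⟩, hmin⟩ := WellFounded.has_min
    (wellFounded_lt (α := Submodule A (Fin n → A))) s hs
  have hfin : Module.Finite A Q := inferInstance
  have hsurj : Function.Surjective (π.domRestrict Q) := by
    rw [← LinearMap.range_eq_top, LinearMap.range_domRestrict, hQπ]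
  refine ⟨Q, inferInstance, inferInstance, π.domRestrict Q, hfin, hQ, hsurj, ?_⟩
  intro N hN
  set f := π.domRestrict Q with hf
  have hNs : Function.Surjective (f.domRestrict N) := by
    rw [← LinearMap.range_eq_top, LinearMap.range_domRestrict, hN]
  obtain ⟨h, hh⟩ := Module.projective_lifting_property (f.domRestrict N) f hNs
  let h' : Module.End A Q := N.subtype ∘ₗ h
  have hh' : ∀ x, f (h' x) = f x := fun x => LinearMap.congr_fun hh x
  have hpow : ∀ (k : ℕ) x, f ((h' ^ k) x) = f x := by
    intro k
    induction k with
    | zero => intro x; simp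
    | succ k ih => intro x; rw [pow_succ, Module.End.mul_apply, ih, hh']
  obtain ⟨k, hk, hk1⟩ := ((h'.eventually_isCompl_ker_pow_range_pow).and
    (Filter.eventually_ge_atTop 1)).exists
  have hproj : Module.Projective A (LinearMap.range (h' ^ k)) := by
    refine Module.Projective.of_split (LinearMap.range (h' ^ k)).subtype
      (Submodule.projectionOnto _ _ hk.symm) ?_
    refine LinearMap.ext fun x => ?_
    exact Submodule.projectionOnto_apply_left hk.symm x
  let Q' := (LinearMap.range (h' ^ k)).map Q.subtype
  have hQ's : Q' ∈ s := by
    refine ⟨Module.Projective.of_equiv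
      (Submodule.equivMapOfInjective Q.subtype Q.injective_subtype (LinearMap.range (h' ^ k))), ?_⟩
    rw [eq_top_iff]
    intro m _
    obtain ⟨x, hx⟩ := hsurj m
    refine ⟨((h' ^ k) x : Q), ⟨_, ⟨x, rfl⟩, rfl⟩, ?_⟩
    have := hpow k x
    rw [hx] at this
    exact this
  have hQ'Q : Q' = Q := by
    by_contra hne
    exact hmin Q' hQ's (lt_of_le_of_ne (Submodule.map_subtype_le _ _) hne)
  rw [eq_top_iff]
  intro x _
  have hx : (x : Fin n → A) ∈ Q' := by rw [hQ'Q]; exact x.2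
  obtain ⟨y, ⟨z, hz⟩, hy⟩ := hx
  have hyx : y = x := Subtype.ext hy
  rw [← hyx, ← hz]
  obtain ⟨j, rfl⟩ : ∃ j, k = j + 1 := ⟨k - 1, by omega⟩
  rw [pow_succ', Module.End.mul_apply]
  exact (h _).2

lemma exists_coverHom (M : ModuleCat.{0} A) [Module.Finite A M] :
    ∃ (P : ModuleCat.{0} A) (f : P ⟶ M), Module.Finite A P ∧ Module.Projective A P ∧
      Function.Surjective f.hom ∧ IsProjectiveCoverHom A f := by
  obtain ⟨P, _, _, f, hfin, hproj, hs, he⟩ := exists_cover (A := A) M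
  refine ⟨ModuleCat.of A P, ModuleCat.ofHom f, hfin, hproj, hs, ?_, ?_, ?_⟩
  · exact (IsProjective.iff_projective (R := A) P).1 hproj
  · exact (ModuleCat.epi_iff_surjective _).2 hs
  · intro N g hg
    rw [ModuleCat.epi_iff_surjective] at hg ⊢
    have := he (LinearMap.range g.hom) (by
      rw [← LinearMap.range_comp, LinearMap.range_eq_top]
      exact hg)
    rwa [LinearMap.range_eq_top] at this

end cover

section ext

variable {A : Type} [Ring A]

lemma kernel_shortExact {P M : ModuleCat.{0} A} (f : P ⟶ M) [Epi f] :
    (ShortComplex.mk (kernel.ι f) f (kernel.condition f)).ShortExact :=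
  { exact := ShortComplex.exact_kernel f }

lemma cokernel_shortExact {P M : ModuleCat.{0} A} (f : P ⟶ M) [Mono f] :
    (ShortComplex.mk f (cokernel.π f) (cokernel.condition f)).ShortExact :=
  { exact := ShortComplex.exact_cokernel f }

lemma ProjDimLE.hasPD {n : ℕ} {M : ModuleCat.{0} A} (h : ProjDimLE A n M) :
    HasProjectiveDimensionLT M (n + 1) := by
  induction h with
  | zero M h => exact inferInstance
  | succ n M P f hP hf h ih =>
    exact (kernel_shortExact f).hasProjectiveDimensionLT_X₃ (n + 1) ih
      (hasProjectiveDimensionLT_of_ge P 1 _ (by omega))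

lemma InjDimLE.hasID {n : ℕ} {M : ModuleCat.{0} A} (h : InjDimLE A n M) :
    HasInjectiveDimensionLT M (n + 1) := by
  induction h with
  | zero M h => exact inferInstance
  | succ n M P f hP hf h ih =>
    exact (cokernel_shortExact f).hasInjectiveDimensionLT_X₁ (n + 1) ih
      (hasInjectiveDimensionLT_of_ge P 1 _ (by omega))

/-- Vanishing of `Ext`. -/
def EV (X M : ModuleCat.{0} A) (i : ℕ) : Prop := ∀ e : Ext.{0} X M i, e = 0

lemma EV.of_retract {X Y M : ModuleCat.{0} A} {i : ℕ} (a : X ⟶ Y) (b : Y ⟶ X)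
    (h : a ≫ b = 𝟙 X) (hY : EV Y M i) : EV X M i := by
  intro e
  have : e = (Ext.mk₀ (a ≫ b)).comp e (zero_add i) := by rw [h]; simp
  rw [this, ← Ext.mk₀_comp_mk₀_assoc, hY ((Ext.mk₀ b).comp e (zero_add i)), Ext.comp_zero]

lemma EV.of_iso {X Y M : ModuleCat.{0} A} {i : ℕ} (a : X ≅ Y) (hY : EV Y M i) : EV X M i :=
  EV.of_retract a.hom a.inv (by simp) hY

lemma EV.of_projective {X M : ModuleCat.{0} A} [Projective X] (i : ℕ) : EV X M (i + 1) :=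
  fun e => e.eq_zero_of_hasProjectiveDimensionLT 1 (by omega)

lemma EV.of_X₂ {S : ShortComplex (ModuleCat.{0} A)} (hS : S.ShortExact) {M : ModuleCat.{0} A}
    {i : ℕ} (h1 : EV S.X₁ M i) (h3 : EV S.X₃ M i) : EV S.X₂ M i := by
  intro x₂
  obtain ⟨x₃, rfl⟩ := Ext.contravariant_sequence_exact₂ hS _ x₂ (h1 _)
  rw [h3 x₃, Ext.comp_zero]

lemma EV.prod {X Y : Type} [AddCommGroup X] [Module A X] [AddCommGroup Y] [Module A Y]
    {M : ModuleCat.{0} A} {i : ℕ}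
    (h1 : EV (ModuleCat.of A X) M i) (h3 : EV (ModuleCat.of A Y) M i) :
    EV (ModuleCat.of A (X × Y)) M i := by
  have hS : (ShortComplex.mk (ModuleCat.ofHom (LinearMap.inl A X Y))
      (ModuleCat.ofHom (LinearMap.snd A X Y)) (by ext; simp)).ShortExact := by
    refine ModuleCat.shortComplex_shortExact _ ?_ LinearMap.inl_injective LinearMap.snd_surjective
    intro y
    constructor
    · intro hy
      refine ⟨y.1, ?_⟩
      ext
      · rfl
      · exact hy.symm
    · rintro ⟨x, rfl⟩
      rfl
  exact EV.of_X₂ hS h1 h3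

lemma EV.pi {W : Type} [AddCommGroup W] [Module A W] {M : ModuleCat.{0} A} {i : ℕ}
    (h : EV (ModuleCat.of A W) M i) (n : ℕ) : EV (ModuleCat.of A (Fin n → W)) M i := by
  induction n with
  | zero =>
    intro e
    have hz : IsZero (ModuleCat.of A (Fin 0 → W)) := ModuleCat.isZero_of_subsingleton _
    have := hz.hasProjectiveDimensionLT_zero
    exact e.eq_zero_of_hasProjectiveDimensionLT 0 (by omega)
  | succ n ih =>
    exact EV.of_iso (LinearEquiv.toModuleIso (Fin.consLinearEquiv A (fun _ => W)).symm)
      (EV.prod h ih)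

lemma EV.syz_down {M X Y : ModuleCat.{0} A} (h : IsSyzygyOf A M X) {i : ℕ}
    (hM : EV M Y (i + 2)) : EV X Y (i + 1) := by
  obtain ⟨P, f, ⟨hP, hf, -⟩, ⟨e⟩⟩ := h
  refine EV.of_iso e ?_
  intro x₁
  obtain ⟨x₂, rfl⟩ := Ext.contravariant_sequence_exact₁ (kernel_shortExact f) _ x₁ (add_comm _ _)
    (hM _)
  rw [EV.of_projective i x₂, Ext.comp_zero]

lemma EV.syz_up {M X Y : ModuleCat.{0} A} (h : IsSyzygyOf A M X) {i : ℕ}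
    (hM : EV X Y i) : EV M Y (i + 1) := by
  obtain ⟨P, f, ⟨hP, hf, -⟩, ⟨e⟩⟩ := h
  have hK : EV (kernel f) Y i := EV.of_iso e.symm hM
  intro x₃
  obtain ⟨x₁, rfl⟩ := Ext.contravariant_sequence_exact₃ (kernel_shortExact f) _ x₃
    (EV.of_projective i _) (add_comm _ _)
  rw [hK x₁, Ext.comp_zero]

lemma EV.nsyz_down {Y : ModuleCat.{0} A} {n : ℕ} : ∀ {M X : ModuleCat.{0} A},
    IsNthSyzygy A n M X → ∀ {i : ℕ}, EV M Y (i + 1 + n) → EV X Y (i + 1) := by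
  induction n with
  | zero => rintro M X ⟨e⟩ i h; exact EV.of_iso e h
  | succ n ih =>
    rintro M X ⟨Z, hZ, hX⟩ i h
    exact ih hX (by
      have := EV.syz_down (i := i + n) hZ (by convert h using 1; omega)
      convert this using 1; omega)

lemma EV.nsyz_up {Y : ModuleCat.{0} A} {n : ℕ} : ∀ {M X : ModuleCat.{0} A},
    IsNthSyzygy A n M X → ∀ {i : ℕ}, EV X Y i → EV M Y (i + n) := by
  induction n with
  | zero => rintro M X ⟨e⟩ i h; exact EV.of_iso e.symm h
  | succ n ih =>
    rintro M X ⟨Z, hZ, hX⟩ i h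
    exact EV.syz_up hZ (ih hX h)

lemma EV.of_delLE {S M : ModuleCat.{0} A} {d n : ℕ} (hS : DelLE A d S) (hdn : d < n)
    (hM : HasInjectiveDimensionLT M (n + 1)) : EV S M n := by
  obtain ⟨X, hX, M', -, X', hX', m, a, b, hab⟩ := hS
  obtain ⟨j, rfl⟩ : ∃ j, n = j + 1 + d := ⟨n - d - 1, by omega⟩
  refine EV.nsyz_up hX (EV.of_retract a b hab (EV.pi (EV.prod ?_ ?_) m))
  · have : Projective (ModuleCat.of A A) :=
      (IsProjective.iff_projective (R := A) A).1 inferInstance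
    exact EV.of_projective j
  · exact EV.nsyz_down hX' (fun e => e.eq_zero_of_hasInjectiveDimensionLT (j + 1 + d + 1)
      (by omega))

/-- If `Ext^1` out of every simple module vanishes, it vanishes on finite length modules. -/
lemma EV.of_finiteLength {M : ModuleCat.{0} A} {i : ℕ}
    (h : ∀ S : ModuleCat.{0} A, IsSimpleModule A S → EV S M i)
    {N : Type} [AddCommGroup N] [Module A N] (hN : IsFiniteLength A N) :
    EV (ModuleCat.of A N) M i := by
  induction hN with
  | @of_subsingleton N _ _ _ =>
    intro e
    have hz : IsZero (ModuleCat.of A N) := ModuleCat.isZero_of_subsingleton _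
    have := hz.hasProjectiveDimensionLT_zero
    exact e.eq_zero_of_hasProjectiveDimensionLT 0 (by omega)
  | @of_simple_quotient N _ _ K hs hK ih =>
    have hS : (ShortComplex.mk (ModuleCat.ofHom K.subtype)
        (ModuleCat.ofHom K.mkQ) (by ext; simp)).ShortExact := by
      refine ModuleCat.shortComplex_shortExact _ ?_ K.injective_subtype K.mkQ_surjective
      exact LinearMap.exact_subtype_mkQ K
    exact EV.of_X₂ hS ih (h (ModuleCat.of A (N ⧸ K)) hs)

lemma injective_of_EV [IsArtinianRing A] {M : ModuleCat.{0} A}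
    (h : ∀ S : ModuleCat.{0} A, IsSimpleModule A S → EV S M 1) : Injective M := by
  suffices Module.Injective A M from (Module.injective_iff_injective_object A M).1 this
  apply Module.Baer.injective
  intro I g
  have hfl : IsFiniteLength A (A ⧸ I) :=
    isFiniteLength_iff_isNoetherian_isArtinian.2 ⟨inferInstance, inferInstance⟩
  have hQ : EV (ModuleCat.of A (A ⧸ I)) M 1 := EV.of_finiteLength h hfl
  have hS : (ShortComplex.mk (ModuleCat.ofHom (Submodule.subtype I))
      (ModuleCat.ofHom (Submodule.mkQ I)) (by ext; simp)).ShortExact := by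
    refine ModuleCat.shortComplex_shortExact _ ?_ (Submodule.injective_subtype I)
      (Submodule.mkQ_surjective I)
    exact LinearMap.exact_subtype_mkQ I
  obtain ⟨φ, hφ⟩ := Ext.contravariant_sequence_exact₁ hS M
    (Ext.mk₀ (ModuleCat.ofHom g)) (zero_add 1) (hQ _)
  obtain ⟨φ, rfl⟩ := Ext.homEquiv₀.symm.surjective φ
  have hφ' : ModuleCat.ofHom (Submodule.subtype I) ≫ φ = ModuleCat.ofHom g :=
    Ext.homEquiv₀.symm.injective (by simpa using hφ)
  refine ⟨φ.hom, fun x hx => ?_⟩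
  have := congrArg (fun k => k.hom ⟨x, hx⟩) hφ'
  exact this

lemma injDimLE_of_EV [IsArtinianRing A] (n : ℕ) : ∀ {M : ModuleCat.{0} A},
    (∀ S : ModuleCat.{0} A, IsSimpleModule A S → EV S M (n + 1)) → InjDimLE A n M := by
  induction n with
  | zero => intro M h; exact .zero _ (injective_of_EV h)
  | succ n ih =>
    intro M h
    refine .succ n M (Injective.under M) (Injective.ι M) inferInstance inferInstance (ih ?_)
    intro S hS x₃
    obtain ⟨x₂, rfl⟩ := Ext.covariant_sequence_exact₃ S (cokernel_shortExact (Injective.ι M)) x₃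
      rfl (h S hS _)
    have : x₂ = 0 := x₂.eq_zero_of_hasInjectiveDimensionLT 1 (by omega)
    rw [this, Ext.zero_comp]

end ext

section del

variable {A : Type} [Ring A]

lemma isSyzygyOf_ker {P M : ModuleCat.{0} A} {f : P ⟶ M} (hf : IsProjectiveCoverHom A f) :
    IsSyzygyOf A M (ModuleCat.of A (LinearMap.ker f.hom)) :=
  ⟨P, f, hf, ⟨(ModuleCat.kernelIsoKer f).symm⟩⟩

/-- `X` is in `add (A ⊕ Z)` if it is a summand of `M ⊕ Z` with `M` f.g. projective. -/
lemma inAdd_of_prod {X M Z : Type} [AddCommGroup X] [Module A X] [AddCommGroup M] [Module A M]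
    [AddCommGroup Z] [Module A Z] [Module.Finite A M] [Module.Projective A M]
    (i : X →ₗ[A] M × Z) (r : M × Z →ₗ[A] X) (h : ∀ x, r (i x) = x) :
    InAdd A (ModuleCat.of A X) (ModuleCat.of A (A × Z)) := by
  obtain ⟨k, π, hπ⟩ := Module.Finite.exists_fin' A M
  let ρ : (Fin (k + 1) → A) →ₗ[A] M := π ∘ₗ LinearMap.funLeft A A Fin.castSucc
  have hρ : Function.Surjective ρ := by
    intro m
    obtain ⟨v, rfl⟩ := hπ m
    refine ⟨fun j => if hj : (j : ℕ) < k then v ⟨j, hj⟩ else 0, ?_⟩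
    simp only [ρ, LinearMap.comp_apply]
    congr 1
    ext j
    simp [LinearMap.funLeft_apply]
  obtain ⟨σ, hσ⟩ := Module.projective_lifting_property ρ LinearMap.id hρ
  have hσ' : ∀ m, ρ (σ m) = m := fun m => LinearMap.congr_fun hσ m
  let I : M × Z →ₗ[A] (Fin (k + 1) → A × Z) :=
    LinearMap.pi fun j => ((LinearMap.proj j ∘ₗ σ).prodMap LinearMap.id)
  let T : (Fin (k + 1) → A × Z) →ₗ[A] M × Z :=
    (ρ ∘ₗ LinearMap.pi fun j => LinearMap.fst A A Z ∘ₗ LinearMap.proj j).prod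
      (LinearMap.snd A A Z ∘ₗ LinearMap.proj 0)
  have hTI : ∀ y, T (I y) = y := by
    rintro ⟨m, z⟩
    refine Prod.ext ?_ rfl
    exact hσ' m
  refine ⟨k + 1, ModuleCat.ofHom (I ∘ₗ i), ModuleCat.ofHom (r ∘ₗ T), ?_⟩
  ext x
  change r (T (I (i x))) = x
  rw [hTI, h]

variable [IsArtinianRing A]

/-- The key statement: if `0 → X → M → N → 0` is exact with `pd M ≤ n`, then
`Ω^n X ∈ add (A ⊕ Ω^{n+1} N)`. -/
lemma key (n : ℕ) : ∀ (X M N : Type) [AddCommGroup X] [Module A X] [AddCommGroup M] [Module A M]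
    [AddCommGroup N] [Module A N] [Module.Finite A X] [Module.Finite A M] [Module.Finite A N]
    (i : X →ₗ[A] M) (p : M →ₗ[A] N), Function.Injective i → Function.Exact i p →
    Function.Surjective p → HasProjectiveDimensionLT (ModuleCat.of A M) (n + 1) →
    ∃ Y, IsNthSyzygy A n (ModuleCat.of A X) Y ∧
      ∃ Z, IsNthSyzygy A (n + 1) (ModuleCat.of A N) Z ∧ InAdd A Y (ModuleCat.of A (A × ↥Z)) := by
  induction n with
  | zero =>
    intro X M N _ _ _ _ _ _ _ _ _ i p hi hip hp hM
    obtain ⟨P, f, hPfin, hPproj, hfs, hf⟩ := exists_coverHom (ModuleCat.of A N)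
    have hMc : Projective (ModuleCat.of A M) := projective_iff_hasProjectiveDimensionLT_one.2 hM
    have hMp : Module.Projective A M := (IsProjective.iff_projective (R := A) M).2 hMc
    refine ⟨ModuleCat.of A X, ⟨Iso.refl _⟩, ModuleCat.of A (LinearMap.ker f.hom),
      ⟨_, isSyzygyOf_ker hf, ⟨Iso.refl _⟩⟩, ?_⟩
    obtain ⟨l, hl⟩ := Module.projective_lifting_property p f.hom hp
    obtain ⟨s, hs⟩ := Module.projective_lifting_property f.hom p hfs
    have hl' : ∀ y, p (l y) = f.hom y := fun y => LinearMap.congr_fun hl y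
    have hs' : ∀ m, f.hom (s m) = p m := fun m => LinearMap.congr_fun hs m
    let e : X ≃ₗ[A] LinearMap.range i := LinearEquiv.ofInjective i hi
    let I : X →ₗ[A] M × LinearMap.ker f.hom := i.prod
      (LinearMap.codRestrict (LinearMap.ker f.hom) (s ∘ₗ i) (fun x => by
        rw [LinearMap.mem_ker, LinearMap.comp_apply, hs', hip.apply_apply_eq_zero]))
    let t : M × LinearMap.ker f.hom →ₗ[A] M :=
      (LinearMap.id - l ∘ₗ s) ∘ₗ LinearMap.fst A _ _ +
        (l ∘ₗ (LinearMap.ker f.hom).subtype) ∘ₗ LinearMap.snd A _ _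
    have ht : ∀ y, t y ∈ LinearMap.range i := by
      rintro ⟨m, k⟩
      refine (hip _).1 ?_
      have hk : f.hom (k : P) = 0 := k.2
      simp [t, hl', hs', hk]
    refine inAdd_of_prod I (e.symm.toLinearMap ∘ₗ LinearMap.codRestrict _ t ht) ?_
    intro x
    rw [LinearMap.comp_apply, LinearEquiv.coe_coe, LinearEquiv.symm_apply_eq]
    apply Subtype.ext
    change t (I x) = i x
    simp [t, I]
  | succ n ih =>
    intro X M N _ _ _ _ _ _ _ _ _ i p hi hip hp hM
    obtain ⟨PN, f, hPNfin, hPNproj, hfs, hf⟩ := exists_coverHom (ModuleCat.of A N)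
    obtain ⟨PX, g, hPXfin, hPXproj, hgs, hg⟩ := exists_coverHom (ModuleCat.of A X)
    obtain ⟨l, hl⟩ := Module.projective_lifting_property p f.hom hp
    have hl' : ∀ y, p (l y) = f.hom y := fun y => LinearMap.congr_fun hl y
    have hpi : ∀ x, p (i x) = 0 := hip.apply_apply_eq_zero
    let q : PX × PN →ₗ[A] M := (i ∘ₗ g.hom).coprod l
    have hq : Function.Surjective q := by
      intro m
      obtain ⟨y, hy⟩ := hfs (p m)
      obtain ⟨x, hx⟩ := (hip (m - l y)).1 (by rw [map_sub, hl', hy, sub_self])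
      obtain ⟨z, rfl⟩ := hgs x
      refine ⟨(z, y), ?_⟩
      simp only [q, LinearMap.coprod_apply, LinearMap.comp_apply]
      rw [hx]; abel
    let K := LinearMap.ker q
    have hK : HasProjectiveDimensionLT (ModuleCat.of A K) (n + 1) := by
      have hS : (ShortComplex.mk (ModuleCat.ofHom K.subtype)
          (ModuleCat.ofHom q) (by ext x; exact x.2)).ShortExact := by
        refine ModuleCat.shortComplex_shortExact _ ?_ K.injective_subtype hq
        exact LinearMap.exact_subtype_ker_map q
      have : Projective (ModuleCat.of A (PX × PN)) :=
        (IsProjective.iff_projective (R := A) (PX × PN)).1 inferInstance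
      exact hS.hasProjectiveDimensionLT_X₁ (n + 1)
        (hasProjectiveDimensionLT_of_ge _ 1 _ (by omega)) hM
    let i' : LinearMap.ker g.hom →ₗ[A] K := LinearMap.codRestrict K
      (LinearMap.inl A PX PN ∘ₗ (LinearMap.ker g.hom).subtype) (fun x => by
        have hx : g.hom (x : PX) = 0 := x.2
        simp [K, q, hx])
    let p' : K →ₗ[A] LinearMap.ker f.hom := LinearMap.codRestrict _
      (LinearMap.snd A PX PN ∘ₗ K.subtype) (fun x => by
        have hx : q (x : PX × PN) = 0 := x.2
        have h2 := congrArg p hx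
        simp only [q, LinearMap.coprod_apply, LinearMap.comp_apply, map_add, hpi, hl',
          zero_add, map_zero] at h2
        exact h2)
    obtain ⟨Y, hY, Z, hZ, hYZ⟩ := ih (LinearMap.ker g.hom) K (LinearMap.ker f.hom) i' p'
      (by
        intro a b hab
        have := congrArg (fun k : K => (k : PX × PN).1) hab
        exact Subtype.ext this)
      (by
        intro k
        constructor
        · intro hk
          have hk2 : (k : PX × PN).2 = 0 := congrArg Subtype.val hk
          have hkq : q (k : PX × PN) = 0 := k.2
          simp only [q, LinearMap.coprod_apply, LinearMap.comp_apply, hk2, map_zero,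
            add_zero] at hkq
          have hk1 : g.hom (k : PX × PN).1 = 0 := hi (by rw [hkq, map_zero])
          refine ⟨⟨(k : PX × PN).1, hk1⟩, ?_⟩
          apply Subtype.ext
          exact Prod.ext rfl hk2.symm
        · rintro ⟨x, rfl⟩
          rfl)
      (by
        rintro ⟨y, hy⟩
        obtain ⟨x, hx⟩ := (hip (l y)).1 (by rw [hl']; exact hy)
        obtain ⟨z, rfl⟩ := hgs x
        refine ⟨⟨(-z, y), ?_⟩, rfl⟩
        change q (-z, y) = 0
        simp only [q, LinearMap.coprod_apply, LinearMap.comp_apply, map_neg]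
        rw [hx]; abel)
      hK
    exact ⟨Y, ⟨_, isSyzygyOf_ker hg, hY⟩, Z, ⟨_, isSyzygyOf_ker hf, hZ⟩, hYZ⟩

lemma delLE_of_mono {S M : ModuleCat.{0} A} [Module.Finite A M] (f : S ⟶ M) (hf : Mono f)
    {n : ℕ} (hM : HasProjectiveDimensionLT M (n + 1)) : DelLE A n S := by
  have hinj : Function.Injective f.hom := (ModuleCat.mono_iff_injective f).1 hf
  have : Module.Finite A S := Module.Finite.of_injective f.hom hinj
  obtain ⟨Y, hY, Z, hZ, h⟩ := key n S M (M ⧸ LinearMap.range f.hom) f.hom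
    (LinearMap.range f.hom).mkQ hinj (LinearMap.exact_map_mkQ_range f.hom)
    (Submodule.mkQ_surjective _) hM
  exact ⟨Y, hY, ModuleCat.of A (M ⧸ LinearMap.range f.hom),
    inferInstanceAs (Module.Finite A (M ⧸ LinearMap.range f.hom)), Z, hZ, h⟩

end del

section dims

variable {A : Type} [Ring A]

lemma exists_nat_projDim {M : ModuleCat.{0} A} (h : projDim A M ≠ ⊤) :
    ∃ n : ℕ, projDim A M = n ∧ ProjDimLE A n M := by
  have hne : {d : ℕ∞ | ∃ n : ℕ, d = n ∧ ProjDimLE A n M}.Nonempty := by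
    by_contra hcon
    rw [Set.not_nonempty_iff_eq_empty] at hcon
    exact h (by rw [projDim, hcon, sInf_empty])
  obtain ⟨n, hn, hn'⟩ := csInf_mem hne
  exact ⟨n, hn, hn'⟩

lemma exists_nat_injDim {M : ModuleCat.{0} A} (h : injDim A M ≠ ⊤) :
    ∃ n : ℕ, injDim A M = n ∧ InjDimLE A n M := by
  have hne : {d : ℕ∞ | ∃ n : ℕ, d = n ∧ InjDimLE A n M}.Nonempty := by
    by_contra hcon
    rw [Set.not_nonempty_iff_eq_empty] at hcon
    exact h (by rw [injDim, hcon, sInf_empty])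
  obtain ⟨n, hn, hn'⟩ := csInf_mem hne
  exact ⟨n, hn, hn'⟩

lemma bigFinInj_le [IsArtinianRing A] : bigFinInjDim A ≤ delAlg A := by
  refine sSup_le ?_
  rintro _ ⟨M, rfl, hM⟩
  obtain ⟨n, hn, hn'⟩ := exists_nat_injDim hM
  rw [hn]
  cases n with
  | zero => simp
  | succ n =>
    have hnot : ¬ InjDimLE A n M := by
      intro hcon
      have : injDim A M ≤ n := sInf_le ⟨n, rfl, hcon⟩
      rw [hn] at this
      exact absurd (ENat.natCast_le_natCast.1 this) (by omega)
    have hex : ∃ S : ModuleCat.{0} A, IsSimpleModule A S ∧ ¬ EV S M (n + 1) := by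
      by_contra! hcon
      exact hnot (injDimLE_of_EV n hcon)
    obtain ⟨S, hS, hSM⟩ := hex
    refine le_trans ?_ (le_sSup (⟨S, hS, rfl⟩ : delLevel A S ∈ {d : ℕ∞ | ∃ S : ModuleCat.{0} A,
      IsSimpleModule A ↥S ∧ delLevel A S = d}))
    refine le_sInf ?_
    rintro _ ⟨m, rfl, hm⟩
    by_contra hlt
    rw [not_le, ENat.natCast_lt_natCast] at hlt
    exact hSM (EV.of_delLE hm hlt (InjDimLE.hasID hn'))

end dims

end ArtinAlg.Aux


open ArtinAlg in
/-- Let `A` be an artin algebra and assume that every simple module `S`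
is a submodule of a finitely generated module `M_S` of finite projective dimension.
Let `d = max_S pd M_S`. Then `Fin-inj A ≤ del A ≤ d ≤ fin-pro A`. -/
theorem statement_3 (R : Type) [CommRing R] [IsArtinianRing R]
    (A : Type) [Ring A] [Algebra R A] [Module.Finite R A]
    (MS : ModuleCat.{0} A → ModuleCat.{0} A)
    (hMS : ∀ S : ModuleCat.{0} A, IsSimpleModule A ↥S →
      Module.Finite A ↥(MS S) ∧ (∃ f : S ⟶ MS S, CategoryTheory.Mono f) ∧
        projDim A (MS S) ≠ ⊤)
    (d : ℕ∞)
    (hd : d = sSup {x : ℕ∞ |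
      ∃ S : ModuleCat.{0} A, IsSimpleModule A ↥S ∧ x = projDim A (MS S)}) :
    bigFinInjDim A ≤ delAlg A ∧ delAlg A ≤ d ∧ d ≤ finProDim A := by
  have : IsArtinianRing A := IsArtinianRing.of_finite R A
  refine ⟨Aux.bigFinInj_le, ?_, ?_⟩
  · refine sSup_le ?_
    rintro _ ⟨S, hS, rfl⟩
    obtain ⟨hfin, ⟨f, hf⟩, hpd⟩ := hMS S hS
    obtain ⟨n, hn, hn'⟩ := Aux.exists_nat_projDim hpd
    have h1 : delLevel A S ≤ n := sInf_le ⟨n, rfl, Aux.delLE_of_mono f hf (Aux.ProjDimLE.hasPD hn')⟩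
    rw [hd]
    refine le_trans h1 ?_
    rw [← hn]
    exact le_sSup ⟨S, hS, rfl⟩
  · rw [hd]
    refine sSup_le ?_
    rintro _ ⟨S, hS, rfl⟩
    obtain ⟨hfin, -, hpd⟩ := hMS S hS
    exact le_sSup ⟨MS S, hfin, rfl, hpd⟩
end
end
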